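/- arXiv:1902.06591 — 2 statements merged into one kernel-verified Lean document; each statement's English description precedes it below -/
import Mathlib

section
/- For every guided relation Ψ ⊆ G* × D*: C(N(Ψ)) ⊆ N(C(Ψ)). -/
/-!
The null closure of `Ψ` consists of the pairs `(γ, ρ)` such that `γ` arises from some `γ₀` with
`(γ₀, ρ) ∈ Ψ` by replacing some of its states, in parallel, by null derivations (`NullRepl`). It
therefore suffices that `NullRepl` is a simulation (`NullRepl.reach`): if `γ` comes from `γ₀` and
`γ →_δ γ'`, then `γ₀ →_δ γ₀'` for some `γ₀'` from which `γ'` comes.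

For a step at a leading state, the same step applies to `γ₀`, because a null derivation is nonempty
and so cannot vanish in front of that state. For a block step, the block is a concatenation of
guiding transitions already present in `γ₀` and of inserted null derivations; `γ₀` executes the
former as blocks and the latter as ordinary steps on the replaced states, and the labels
concatenate to the same sequence (`NullRepl.block`).
-/

/-- Transitions of a recursive transition network over states `S`,
terminal alphabet `A`, and production labels `P`. -/
inductive Tr (S A P : Type) : Type where
  | shift (s : S) (a : A) (t : S)
  | call (s u t : S)
  | reduce (s : S) (p : P)

variable {S A P : Type}

/-- A transition is a shift transition. -/
def Tr.isShift : Tr S A P → Prop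
  | .shift _ _ _ => True
  | _ => False

/-- One-step reachability induced by a single transition on configurations (words over `S`). -/
inductive Step : Tr S A P → List S → List S → Prop where
  | shift (s : S) (a : A) (t : S) (σ : List S) :
      Step (Tr.shift s a t) (s :: σ) (t :: σ)
  | call (s u t : S) (σ : List S) :
      Step (Tr.call s u t) (s :: σ) (u :: t :: σ)
  | reduce (s : S) (p : P) (σ : List S) :
      Step (Tr.reduce s p) (s :: σ) σ

/-- Reachability along a sequence of transitions, all belonging to `D`. -/
inductive Reach (D : Set (Tr S A P)) : List (Tr S A P) → List S → List S → Prop where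
  | nil (σ : List S) : Reach D [] σ σ
  | cons {d : Tr S A P} {δ : List (Tr S A P)} {σ σ' σ'' : List S} :
      d ∈ D → Step d σ σ' → Reach D δ σ' σ'' → Reach D (d :: δ) σ σ''

/-- `η` consists of non-shift transitions (membership in `D` is enforced by `Reach`). -/
def EpsSeq (η : List (Tr S A P)) : Prop := ∀ d ∈ η, ¬ d.isShift

/-- Guided configuration symbols: states or (non-shift) guiding transitions. -/
abbrev GSym (S A P : Type) := S ⊕ Tr S A P

/-- `η ∈ D_ε*`, with membership in `D` explicit. -/
def EpsTr (D : Set (Tr S A P)) (η : List (Tr S A P)) : Prop :=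
  ∀ d ∈ η, d ∈ D ∧ ¬ d.isShift

/-- The guided configuration does not begin with a (guiding) transition. -/
def notGuidedHead : List (GSym S A P) → Prop
  | Sum.inr _ :: _ => False
  | _ => True

/-- One-step reachability on guided configurations: the three transition rules act
when the first letter is a state, and a nonempty prefix block of guiding transitions
is executed en bloc (as a single step labelled by the block), provided what follows
does not begin with a transition. -/
inductive GStep (D : Set (Tr S A P)) :
    List (Tr S A P) → List (GSym S A P) → List (GSym S A P) → Prop where
  | shift {s : S} {a : A} {t : S} {γ : List (GSym S A P)} : Tr.shift s a t ∈ D →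
      GStep D [Tr.shift s a t] (Sum.inl s :: γ) (Sum.inl t :: γ)
  | call {s u t : S} {γ : List (GSym S A P)} : Tr.call s u t ∈ D →
      GStep D [Tr.call s u t] (Sum.inl s :: γ) (Sum.inl u :: Sum.inl t :: γ)
  | reduce {s : S} {p : P} {γ : List (GSym S A P)} : Tr.reduce s p ∈ D →
      GStep D [Tr.reduce s p] (Sum.inl s :: γ) γ
  | block {η : List (Tr S A P)} {γ : List (GSym S A P)} :
      η ≠ [] → EpsTr D η → notGuidedHead γ →
      GStep D η (η.map Sum.inr ++ γ) γ

/-- `γ →_δ γ'` on guided configurations: a sequence of guided steps whose labels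
concatenate to `δ`. -/
inductive GReach (D : Set (Tr S A P)) :
    List (Tr S A P) → List (GSym S A P) → List (GSym S A P) → Prop where
  | nil (γ : List (GSym S A P)) : GReach D [] γ γ
  | step {δ₁ δ₂ : List (Tr S A P)} {γ γ' γ'' : List (GSym S A P)} :
      GStep D δ₁ γ γ' → GReach D δ₂ γ' γ'' → GReach D (δ₁ ++ δ₂) γ γ''

/-- Guided relations: subsets of `G* × D*`. -/
abbrev GRel (S A P : Type) := Set (List (GSym S A P) × List (Tr S A P))

/-- A guided relation is null-closed if a state `s` nulling via `η ∈ D_ε*`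
(ordinary semantics) may be replaced by `η` in first components. -/
def GNullClosed (D : Set (Tr S A P)) (Ψ : GRel S A P) : Prop :=
  ∀ (γ₁ : List (GSym S A P)) (s : S) (γ₂ : List (GSym S A P))
    (η ρ : List (Tr S A P)),
    EpsSeq η → Reach D η [s] [] →
    (γ₁ ++ Sum.inl s :: γ₂, ρ) ∈ Ψ → (γ₁ ++ η.map Sum.inr ++ γ₂, ρ) ∈ Ψ

/-- Null closure of a guided relation: the smallest null-closed relation containing it. -/
def GNClo (D : Set (Tr S A P)) (Ψ : GRel S A P) : GRel S A P :=
  ⋂₀ {T | Ψ ⊆ T ∧ GNullClosed D T}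

/-- Call-reduce closure of a guided relation:
`C(Ψ) = {(γ', rev η · rev δ) : γ →_η γ', η ∈ D_ε*, (γ, rev δ) ∈ Ψ}`. -/
def GCRC (D : Set (Tr S A P)) (Ψ : GRel S A P) : GRel S A P :=
  {p | ∃ (γ : List (GSym S A P)) (η ρ : List (Tr S A P)),
    EpsSeq η ∧ (γ, ρ) ∈ Ψ ∧ GReach D η γ p.1 ∧ p.2 = η.reverse ++ ρ}

/-- Shift of a guided relation by the terminal `a`:
`S_a(Ψ) = {(γ', d · rev δ) : γ →_d γ', d ∈ D_a, (γ, rev δ) ∈ Ψ}`. -/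
def GShiftR (D : Set (Tr S A P)) (a : A) (Ψ : GRel S A P) : GRel S A P :=
  {p | ∃ (γ : List (GSym S A P)) (ρ : List (Tr S A P)) (s t : S),
    Tr.shift s a t ∈ D ∧ (γ, ρ) ∈ Ψ ∧
    GStep D [Tr.shift s a t] γ p.1 ∧ p.2 = Tr.shift s a t :: ρ}

/-- `NullRepl D γ₀ γ`: the guided configuration `γ` is obtained from `γ₀` by replacing any number
of states `s` by sequences `η ∈ D_ε*` with `s →_η ε`. -/
inductive NullRepl (D : Set (Tr S A P)) : List (GSym S A P) → List (GSym S A P) → Prop where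
  | nil : NullRepl D [] []
  | keep (g : GSym S A P) {γ₀ γ : List (GSym S A P)} :
      NullRepl D γ₀ γ → NullRepl D (g :: γ₀) (g :: γ)
  | repl {s : S} {η : List (Tr S A P)} {γ₀ γ : List (GSym S A P)} :
      EpsSeq η → Reach D η [s] [] → NullRepl D γ₀ γ →
      NullRepl D (Sum.inl s :: γ₀) (η.map Sum.inr ++ γ)

theorem NullRepl.refl (D : Set (Tr S A P)) : ∀ γ : List (GSym S A P), NullRepl D γ γ
  | [] => .nil
  | g :: γ => .keep g (NullRepl.refl D γ)

theorem ne_nil_of_reach_nil {D : Set (Tr S A P)} {η : List (Tr S A P)} {s : S}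
    (h : Reach D η [s] []) : η ≠ [] := by
  rintro rfl
  cases h

/-- A further null replacement, anywhere in the target, can be absorbed: the replaced state was
kept from the source, since inserted symbols are transitions. -/
theorem NullRepl.replace {D : Set (Tr S A P)} {γ₀ γ : List (GSym S A P)} (h : NullRepl D γ₀ γ)
    {s : S} {η : List (Tr S A P)} (hη : EpsSeq η) (hs : Reach D η [s] []) :
    ∀ γ₁ γ₂ : List (GSym S A P), γ = γ₁ ++ Sum.inl s :: γ₂ →
      NullRepl D γ₀ (γ₁ ++ η.map Sum.inr ++ γ₂) := by
  induction h with
  | nil => intro γ₁ γ₂ e; simp at e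
  | keep g h ih =>
    intro γ₁ γ₂ e
    cases γ₁ with
    | nil =>
      simp only [List.nil_append, List.cons.injEq] at e
      obtain ⟨rfl, rfl⟩ := e
      exact .repl hη hs h
    | cons g' γ₁ =>
      simp only [List.cons_append, List.cons.injEq] at e
      obtain ⟨rfl, e⟩ := e
      exact .keep g (ih γ₁ γ₂ e)
  | @repl t θ γ₀ γ hθ ht h ih =>
    intro γ₁ γ₂ e
    rcases List.append_eq_append_iff.1 e with ⟨κ, rfl, e'⟩ | ⟨κ, e₁, e₂⟩
    · have := ih κ γ₂ e'
      simpa [List.append_assoc] using NullRepl.repl hθ ht this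
    · cases κ with
      | nil =>
        simp only [List.append_nil, List.nil_append] at e₁ e₂
        have := NullRepl.repl hθ ht (ih [] γ₂ (by simpa using e₂.symm))
        simpa [e₁] using this
      | cons k κ =>
        simp only [List.cons_append, List.cons.injEq] at e₂
        have hm : Sum.inl s ∈ θ.map (Sum.inr : Tr S A P → GSym S A P) := by
          rw [e₁, e₂.1]; simp
        simp at hm

/-- The null closure only contains parallel null replacements of members of `Ψ`. -/
theorem exists_nullRepl_of_mem {D : Set (Tr S A P)} {Ψ : GRel S A P}
    {γ : List (GSym S A P)} {ρ : List (Tr S A P)} (h : (γ, ρ) ∈ GNClo D Ψ) :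
    ∃ γ₀, NullRepl D γ₀ γ ∧ (γ₀, ρ) ∈ Ψ := by
  refine h {p | ∃ γ₀, NullRepl D γ₀ p.1 ∧ (γ₀, p.2) ∈ Ψ} ⟨?_, ?_⟩
  · rintro ⟨γ, ρ⟩ h
    exact ⟨γ, .refl D γ, h⟩
  · rintro γ₁ s γ₂ η ρ hη hs ⟨γ₀, h, h'⟩
    exact ⟨γ₀, h.replace hη hs γ₁ γ₂ rfl, h'⟩

/-- A null-closed relation is closed under parallel null replacement; the context `γ₁` on the left
is what makes the induction go through. -/
theorem NullRepl.mem {D : Set (Tr S A P)} {T : GRel S A P} (hT : GNullClosed D T)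
    {ρ : List (Tr S A P)} {γ₀ γ : List (GSym S A P)} (h : NullRepl D γ₀ γ) :
    ∀ γ₁, (γ₁ ++ γ₀, ρ) ∈ T → (γ₁ ++ γ, ρ) ∈ T := by
  induction h with
  | nil => exact fun _ h => h
  | keep g _ ih =>
    intro γ₁ h
    simpa using ih (γ₁ ++ [g]) (by simpa using h)
  | @repl s η γ₀ γ hη hs _ ih =>
    intro γ₁ h
    simpa using ih (γ₁ ++ η.map Sum.inr) (hT γ₁ s γ₀ η ρ hη hs h)

theorem GReach.trans {D : Set (Tr S A P)} {δ δ' : List (Tr S A P)} {γ γ' γ'' : List (GSym S A P)}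
    (h : GReach D δ γ γ') (h' : GReach D δ' γ' γ'') : GReach D (δ ++ δ') γ γ'' := by
  induction h with
  | nil => exact h'
  | step hs _ ih => rw [List.append_assoc]; exact .step hs (ih h')

/-- Ordinary derivations act on a prefix of states of a guided configuration. -/
theorem GReach.of_reach {D : Set (Tr S A P)} {η : List (Tr S A P)} {σ τ : List S}
    (h : Reach D η σ τ) (γ : List (GSym S A P)) :
    GReach D η (σ.map Sum.inl ++ γ) (τ.map Sum.inl ++ γ) := by
  induction h with
  | nil => exact .nil _
  | cons hd hs _ ih =>
    cases hs with
    | shift => exact .step (.shift hd) ih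
    | call => exact .step (.call hd) ih
    | reduce => exact .step (.reduce hd) ih

/-- A guiding transition in front of a derivation can be executed first. If the derivation starts
with a block, that block must be enlarged, since blocks are only executed when maximal. -/
theorem GReach.cons_guide {D : Set (Tr S A P)} {δ : List (Tr S A P)} {γ γ' : List (GSym S A P)}
    (h : GReach D δ γ γ') (hγ' : notGuidedHead γ') {d : Tr S A P} (hd : d ∈ D ∧ ¬ d.isShift) :
    GReach D (d :: δ) (Sum.inr d :: γ) γ' := by
  have key : ∀ γ, notGuidedHead γ → GStep D [d] (Sum.inr d :: γ) γ := fun γ hγ =>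
    GStep.block (η := [d]) (by simp) (by simpa [EpsTr] using hd) hγ
  cases h with
  | nil => exact .step (key _ hγ') (.nil _)
  | @step δ₁ _ _ _ _ hs h =>
    cases hs with
    | shift hm => exact .step (key (Sum.inl _ :: _) trivial) (.step (.shift hm) h)
    | call hm => exact .step (key (Sum.inl _ :: _) trivial) (.step (.call hm) h)
    | reduce hm => exact .step (key (Sum.inl _ :: _) trivial) (.step (.reduce hm) h)
    | block _ hη hg =>
      refine GReach.step (δ₁ := d :: δ₁) (GStep.block (η := d :: δ₁) (by simp) ?_ hg) h
      rintro x (_ | ⟨_, hx⟩)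
      · exact hd
      · exact hη x hx

/-- A block of transitions at the front lies inside the maximal such block. -/
theorem exists_append_of_notGuidedHead {γ γ' : List (GSym S A P)} (hγ' : notGuidedHead γ') :
    ∀ θ η : List (Tr S A P), θ.map Sum.inr ++ γ = η.map Sum.inr ++ γ' →
      ∃ κ, η = θ ++ κ ∧ γ = κ.map Sum.inr ++ γ'
  | [], η, e => ⟨η, rfl, e⟩
  | d :: θ, [], e => by
    simp only [List.map_nil, List.nil_append] at e
    rw [← e] at hγ'
    exact hγ'.elim
  | d :: θ, d' :: η, e => by
    simp only [List.map_cons, List.cons_append, List.cons.injEq, Sum.inr.injEq] at e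
    obtain ⟨rfl, e⟩ := e
    obtain ⟨κ, rfl, h⟩ := exists_append_of_notGuidedHead hγ' θ η e
    exact ⟨κ, rfl, h⟩

/-- Executing the maximal leading block of `γ` is simulated from the source `γ₀`. -/
theorem NullRepl.block {D : Set (Tr S A P)} {γ₀ γ γ' : List (GSym S A P)} (h : NullRepl D γ₀ γ)
    (hγ' : notGuidedHead γ') : ∀ η : List (Tr S A P), EpsTr D η → γ = η.map Sum.inr ++ γ' →
      ∃ γ₀', GReach D η γ₀ γ₀' ∧ notGuidedHead γ₀' ∧ NullRepl D γ₀' γ' := by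
  induction h with
  | nil =>
    intro η _ e
    obtain ⟨h₁, rfl⟩ := List.append_eq_nil_iff.1 e.symm
    obtain rfl := List.map_eq_nil_iff.1 h₁
    exact ⟨[], .nil _, trivial, .nil⟩
  | keep g h ih =>
    intro η hη e
    cases η with
    | nil =>
      simp only [List.map_nil, List.nil_append] at e
      subst e
      refine ⟨_, .nil _, ?_, .keep g h⟩
      cases g with
      | inl s => trivial
      | inr d => exact hγ'.elim
    | cons d η =>
      simp only [List.map_cons, List.cons_append, List.cons.injEq] at e
      obtain ⟨rfl, e⟩ := e
      obtain ⟨γ₀', h₁, h₂, h₃⟩ := ih η (fun x hx => hη x (List.mem_cons_of_mem _ hx)) e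
      exact ⟨γ₀', h₁.cons_guide h₂ (hη d List.mem_cons_self), h₂, h₃⟩
  | @repl s θ γ₀ γ hθ hs h ih =>
    intro η hη e
    obtain ⟨κ, rfl, e'⟩ := exists_append_of_notGuidedHead hγ' θ η e
    obtain ⟨γ₀', h₁, h₂, h₃⟩ := ih κ (fun x hx => hη x (List.mem_append_right _ hx)) e'
    exact ⟨γ₀', (GReach.of_reach hs γ₀).trans h₁, h₂, h₃⟩

/-- A leading state of the target was already leading in the source. -/
theorem NullRepl.of_inl_cons {D : Set (Tr S A P)} {γ₀ γ' : List (GSym S A P)} {s : S}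
    (h : NullRepl D γ₀ (Sum.inl s :: γ')) : ∃ γ₁, γ₀ = Sum.inl s :: γ₁ ∧ NullRepl D γ₁ γ' := by
  generalize e : Sum.inl s :: γ' = γ at h
  cases h with
  | nil => cases e
  | keep g h =>
    cases e
    exact ⟨_, rfl, h⟩
  | @repl t θ _ _ _ ht _ =>
    cases θ with
    | nil => exact absurd rfl (ne_nil_of_reach_nil ht)
    | cons d θ => simp at e

theorem NullRepl.step {D : Set (Tr S A P)} {δ : List (Tr S A P)} {γ₀ γ γ' : List (GSym S A P)}
    (h : NullRepl D γ₀ γ) (hs : GStep D δ γ γ') :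
    ∃ γ₀', GReach D δ γ₀ γ₀' ∧ NullRepl D γ₀' γ' := by
  cases hs with
  | shift hm =>
    obtain ⟨γ₁, rfl, h'⟩ := h.of_inl_cons
    exact ⟨_, .step (.shift hm) (.nil _), .keep _ h'⟩
  | call hm =>
    obtain ⟨γ₁, rfl, h'⟩ := h.of_inl_cons
    exact ⟨_, .step (.call hm) (.nil _), .keep _ (.keep _ h')⟩
  | reduce hm =>
    obtain ⟨γ₁, rfl, h'⟩ := h.of_inl_cons
    exact ⟨_, .step (.reduce hm) (.nil _), h'⟩
  | block _ hη hγ' =>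
    obtain ⟨γ₀', h₁, _, h₃⟩ := h.block hγ' _ hη rfl
    exact ⟨γ₀', h₁, h₃⟩

theorem NullRepl.reach {D : Set (Tr S A P)} {δ : List (Tr S A P)} {γ₀ γ γ' : List (GSym S A P)}
    (h : NullRepl D γ₀ γ) (hr : GReach D δ γ γ') :
    ∃ γ₀', GReach D δ γ₀ γ₀' ∧ NullRepl D γ₀' γ' := by
  induction hr generalizing γ₀ with
  | nil => exact ⟨γ₀, .nil _, h⟩
  | step hs _ ih =>
    obtain ⟨γ₁, h₁, h'⟩ := h.step hs
    obtain ⟨γ₂, h₂, h''⟩ := ih h'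
    exact ⟨γ₂, h₁.trans h₂, h''⟩

/-- For every guided relation `Ψ ⊆ G* × D*`: `C(N(Ψ)) ⊆ N(C(Ψ))`. -/
theorem guided_closure_nullClosure_subset
    (S A P : Type) (D : Set (Tr S A P)) (Ψ : GRel S A P) :
    GCRC D (GNClo D Ψ) ⊆ GNClo D (GCRC D Ψ) := by
  rintro ⟨γ', _⟩ ⟨γ, η, ρ, hη, hγ, hr, rfl⟩
  obtain ⟨γ₀, h, h₀⟩ := exists_nullRepl_of_mem hγ
  obtain ⟨γ₀', hr', h'⟩ := h.reach hr
  rintro T ⟨hT, hN⟩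
  exact h'.mem hN [] (hT ⟨γ₀, η, ρ, hη, h₀, hr', rfl⟩)
end

section
/- Regularity of nulled atomic closures: for every s ∈ S, the family F_s = {N(Φ_{s⇝ε})} ∪ {N(Φ_{s⇝t}) : t ∈ S} of at most |S|+1 guided relations is closed under guided-relation derivatives of degree |S|; that is, for every member Ψ of F_s and every u ∈ S there exists a collection of at most |S| pairs {(Λ_i, Ψ_i)} with Λ_i ⊆ D* × D* and Ψ_i ∈ F_s which is a derivative of Ψ by u. -/
variable {S A P : Type}

/-- `Φ_{s⇝σ} = {(σ', rev η) : η ∈ D_ε*, s →_η σ·σ'}`, viewed as a guided relation. -/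
def GPhiRel (D : Set (Tr S A P)) (s : S) (σ : List S) : GRel S A P :=
  {p | ∃ (σ' : List S) (η : List (Tr S A P)),
    EpsSeq η ∧ Reach D η [s] (σ ++ σ') ∧ p = (σ'.map Sum.inl, η.reverse)}

/-- The indexed collection `{(ΛC i, ΨC i)}` with `ΛC i ⊆ D* × D*` is a
guided-relation derivative of `Ψ` by `u`: for all `η ∈ D_ε*`, `γ ∈ G*`, `ρ ∈ D*`,
`(η·u·γ, ρ) ∈ Ψ ↔ (η, ρ₂) ∈ ΛC i, (γ, ρ₁) ∈ ΨC i and ρ = ρ₂·ρ₁ for some i`. -/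
def IsGDeriv {I : Type} (D : Set (Tr S A P)) (Ψ : GRel S A P) (u : S)
    (ΛC : I → Set (List (Tr S A P) × List (Tr S A P))) (ΨC : I → GRel S A P) : Prop :=
  ∀ (η : List (Tr S A P)) (γ : List (GSym S A P)) (ρ : List (Tr S A P)),
    EpsTr D η →
    ((η.map Sum.inr ++ Sum.inl u :: γ, ρ) ∈ Ψ ↔
      ∃ (i : I) (ρ₂ ρ₁ : List (Tr S A P)),
        (η, ρ₂) ∈ ΛC i ∧ (γ, ρ₁) ∈ ΨC i ∧ ρ = ρ₂ ++ ρ₁)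

/-- The family `F_s = {N(Φ_{s⇝ε})} ∪ {N(Φ_{s⇝t}) : t ∈ S}`. -/
def GAtomFam (D : Set (Tr S A P)) (s : S) : Set (GRel S A P) :=
  {GNClo D (GPhiRel D s [])} ∪ {Ψ | ∃ t : S, Ψ = GNClo D (GPhiRel D s [t])}

/-- `Nulling D σ γ`: the guided configuration `γ` arises from the word `σ` of states by replacing
some of its letters by sequences of non-shift transitions nulling them. -/
inductive Nulling (D : Set (Tr S A P)) : List S → List (GSym S A P) → Prop where
  | nil : Nulling D [] []
  | keep (s : S) {σ : List S} {γ : List (GSym S A P)} :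
      Nulling D σ γ → Nulling D (s :: σ) (Sum.inl s :: γ)
  | null {s : S} {η : List (Tr S A P)} {σ : List S} {γ : List (GSym S A P)} :
      EpsSeq η → Reach D η [s] [] → Nulling D σ γ → Nulling D (s :: σ) (η.map Sum.inr ++ γ)

theorem Nulling.refl (D : Set (Tr S A P)) (σ : List S) : Nulling D σ (σ.map Sum.inl) := by
  induction σ with
  | nil => exact .nil
  | cons s σ ih => exact .keep s ih

theorem Nulling.append {D : Set (Tr S A P)} {σ τ : List S} {γ γ' : List (GSym S A P)}
    (h : Nulling D σ γ) (h' : Nulling D τ γ') : Nulling D (σ ++ τ) (γ ++ γ') := by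
  induction h with
  | nil => exact h'
  | keep s _ ih => exact .keep s ih
  | null hη hr _ ih =>
    rw [List.append_assoc]
    exact .null hη hr ih

/-- A state letter of a nulled word comes from a letter of the original word, at which both can
be cut. -/
theorem Nulling.split {D : Set (Tr S A P)} {σ : List S} {γ : List (GSym S A P)}
    (h : Nulling D σ γ) : ∀ (γ₁ : List (GSym S A P)) (u : S) (γ₂ : List (GSym S A P)),
    γ = γ₁ ++ Sum.inl u :: γ₂ →
    ∃ ν τ, σ = ν ++ u :: τ ∧ Nulling D ν γ₁ ∧ Nulling D τ γ₂ := by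
  induction h with
  | nil => intro γ₁ u γ₂ e; simp at e
  | @keep s σ γ h ih =>
    intro γ₁ u γ₂ e
    cases γ₁ with
    | nil =>
      simp only [List.nil_append, List.cons.injEq, Sum.inl.injEq] at e
      obtain ⟨rfl, rfl⟩ := e
      exact ⟨[], σ, rfl, .nil, h⟩
    | cons x γ₁ =>
      simp only [List.cons_append, List.cons.injEq] at e
      obtain ⟨rfl, e⟩ := e
      obtain ⟨ν, τ, rfl, h1, h2⟩ := ih γ₁ u γ₂ e
      exact ⟨s :: ν, τ, rfl, .keep s h1, h2⟩
  | @null s η σ γ hη hr h ih =>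
    intro γ₁ u γ₂ e
    rcases List.append_eq_append_iff.1 e with ⟨γ₃, rfl, e'⟩ | ⟨γ₃, e1, e2⟩
    · obtain ⟨ν, τ, rfl, h1, h2⟩ := ih γ₃ u γ₂ e'
      exact ⟨s :: ν, τ, rfl, .null hη hr h1, h2⟩
    · cases γ₃ with
      | nil =>
        obtain ⟨ν, τ, rfl, h1, h2⟩ := ih [] u γ₂ e2.symm
        refine ⟨s :: ν, τ, rfl, ?_, h2⟩
        have := Nulling.null hη hr h1
        rwa [List.append_nil, e1, List.append_nil] at this
      | cons x γ₃ =>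
        simp only [List.cons_append, List.cons.injEq] at e2
        -- the state `u` would be a letter of the block `η` of transitions
        have hm : (Sum.inl u : GSym S A P) ∈ η.map Sum.inr := by
          rw [e1, e2.1]; simp
        simp at hm

theorem Reach.append {D : Set (Tr S A P)} {δ δ' : List (Tr S A P)} {α β γ : List S}
    (h : Reach D δ α β) (h' : Reach D δ' β γ) : Reach D (δ ++ δ') α γ := by
  induction h with
  | nil => exact h'
  | cons hd hs _ ih => exact .cons hd hs (ih h')

theorem Reach.frame {D : Set (Tr S A P)} {δ : List (Tr S A P)} {α β : List S}
    (h : Reach D δ α β) (τ : List S) : Reach D δ (α ++ τ) (β ++ τ) := by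
  induction h with
  | nil => exact .nil _
  | cons hd hs _ ih =>
    refine .cons hd ?_ ih
    cases hs with
    | shift => exact .shift ..
    | call => exact .call ..
    | reduce => exact .reduce ..

theorem Reach.ne_nil {D : Set (Tr S A P)} {δ : List (Tr S A P)} {β μ : List S}
    (h : Reach D δ β μ) (hμ : μ ≠ []) : β ≠ [] := by
  rintro rfl
  cases h with
  | nil => exact hμ rfl
  | cons _ hs _ => cases hs

/-- A run ending in `μ·τ` with `μ` nonempty either passes through some `t·τ` and leaves `τ`
alone from then on, or leaves `τ` alone all the time. -/
theorem Reach.split {D : Set (Tr S A P)} {μ τ : List S} (hμ : μ ≠ []) {δ : List (Tr S A P)}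
    {α ω : List S} (h : Reach D δ α ω) (hω : ω = μ ++ τ) :
    (∃ δ₁ δ₂ t, δ = δ₁ ++ δ₂ ∧ Reach D δ₁ α (t :: τ) ∧ Reach D δ₂ [t] μ) ∨
      ∃ β, α = β ++ τ ∧ Reach D δ β μ := by
  induction h with
  | nil σ => exact .inr ⟨μ, hω, .nil _⟩
  | @cons d δ σ σ' σ'' hd hs hr ih =>
    rcases ih hω with ⟨δ₁, δ₂, t, rfl, h1, h2⟩ | ⟨β, rfl, h⟩
    · exact .inl ⟨d :: δ₁, δ₂, t, rfl, .cons hd hs h1, h2⟩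
    · obtain ⟨b, β, rfl⟩ := List.exists_cons_of_ne_nil (h.ne_nil hμ)
      -- if the step `d` leaves a single letter above `τ`, that letter is `t`; with two or more
      -- letters above `τ`, the step cannot have touched `τ`
      rcases β with _ | ⟨c, β⟩
      · exact .inl ⟨[d], δ, b, rfl, .cons hd hs (.nil _), h⟩
      · cases hs with
        | shift s a => exact .inr ⟨s :: c :: β, rfl, .cons hd (.shift ..) h⟩
        | reduce s p => exact .inr ⟨s :: b :: c :: β, rfl, .cons hd (.reduce ..) h⟩
        | call s => exact .inr ⟨s :: β, rfl, .cons hd (.call ..) h⟩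

/-- A run from a one-letter stack to `μ·τ` with `μ` nonempty factors through some `t·τ`. -/
theorem Reach.split_single {D : Set (Tr S A P)} {μ τ : List S} (hμ : μ ≠ [])
    {δ : List (Tr S A P)} {s : S} (h : Reach D δ [s] (μ ++ τ)) :
    ∃ δ₁ δ₂ t, δ = δ₁ ++ δ₂ ∧ Reach D δ₁ [s] (t :: τ) ∧ Reach D δ₂ [t] μ := by
  rcases Reach.split hμ h rfl with h | ⟨β, e, h⟩
  · exact h
  · obtain ⟨b, β, rfl⟩ := List.exists_cons_of_ne_nil (h.ne_nil hμ)
    simp only [List.cons_append, List.cons.injEq, List.nil_eq, List.append_eq_nil_iff] at e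
    obtain ⟨rfl, rfl, rfl⟩ := e
    exact ⟨[], δ, s, rfl, .nil _, by simpa using h⟩

theorem GNullClosed.mem_of_nulling {D : Set (Tr S A P)} {T : GRel S A P} (hT : GNullClosed D T)
    {ρ : List (Tr S A P)} {σ : List S} {γ : List (GSym S A P)} (h : Nulling D σ γ) :
    ∀ γ₁ : List (GSym S A P), (γ₁ ++ σ.map Sum.inl, ρ) ∈ T → (γ₁ ++ γ, ρ) ∈ T := by
  induction h with
  | nil => exact fun _ h => h
  | keep s _ ih =>
    intro γ₁ h
    have := ih (γ₁ ++ [Sum.inl s]) (by simpa using h)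
    simpa using this
  | @null s η σ γ hη hr _ ih =>
    intro γ₁ h
    have := ih (γ₁ ++ η.map Sum.inr) (hT γ₁ s _ η ρ hη hr h)
    simpa using this

theorem mem_GNClo_GPhiRel {D : Set (Tr S A P)} {s : S} {σ : List S} {γ : List (GSym S A P)}
    {ρ : List (Tr S A P)} :
    (γ, ρ) ∈ GNClo D (GPhiRel D s σ) ↔
      ∃ σ', Nulling D σ' γ ∧ EpsSeq ρ ∧ Reach D ρ.reverse [s] (σ ++ σ') := by
  constructor
  · intro h
    refine h {p | ∃ σ', Nulling D σ' p.1 ∧ EpsSeq p.2 ∧ Reach D p.2.reverse [s] (σ ++ σ')}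
      ⟨?_, ?_⟩
    · rintro _ ⟨σ', η, hη, hr, rfl⟩
      exact ⟨σ', .refl D σ', fun d hd => hη d (List.mem_reverse.1 hd), by simpa using hr⟩
    · rintro γ₁ v γ₂ η ρ hη hr ⟨σ', hn, hρ, h⟩
      obtain ⟨ν, τ, rfl, h1, h2⟩ := hn.split γ₁ v γ₂ rfl
      refine ⟨ν ++ v :: τ, ?_, hρ, h⟩
      rw [List.append_assoc]
      exact h1.append (.null hη hr h2)
  · rintro ⟨σ', hn, hρ, h⟩ T ⟨hT, hc⟩
    refine hc.mem_of_nulling hn [] (hT ⟨σ', ρ.reverse, ?_, h, by simp⟩)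
    exact fun d hd => hρ d (List.mem_reverse.1 hd)

/-- The derivative of `N(Φ_{s⇝σ})` by `u` has relation components `N(Φ_{s⇝t})`, `t ∈ S`. -/
theorem isGDeriv_GNClo_GPhiRel (D : Set (Tr S A P)) (s : S) (σ : List S) (u : S) :
    IsGDeriv D (GNClo D (GPhiRel D s σ)) u
      (fun t => {p | ∃ ν, Nulling D ν (p.1.map Sum.inr) ∧ EpsSeq p.2 ∧
        Reach D p.2.reverse [t] (σ ++ ν ++ [u])})
      (fun t => GNClo D (GPhiRel D s [t])) := by
  intro η γ ρ _
  simp only [mem_GNClo_GPhiRel, Set.mem_ofPred_eq]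
  constructor
  · rintro ⟨σ', hn, hρ, h⟩
    obtain ⟨ν, τ, rfl, h1, h2⟩ := hn.split _ u γ rfl
    obtain ⟨δ₁, δ₂, t, e, hr1, hr2⟩ :=
      Reach.split_single (μ := σ ++ ν ++ [u]) (τ := τ) (by simp) (by simpa using h)
    have e' : ρ = δ₂.reverse ++ δ₁.reverse := by
      rw [← List.reverse_append, ← e, List.reverse_reverse]
    subst e'
    exact ⟨t, δ₂.reverse, δ₁.reverse,
      ⟨ν, h1, fun d hd => hρ d (List.mem_append_left _ hd), by simpa using hr2⟩,
      ⟨τ, h2, fun d hd => hρ d (List.mem_append_right _ hd), by simpa using hr1⟩, rfl⟩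
  · rintro ⟨t, ρ₂, ρ₁, ⟨ν, h1, he2, hr2⟩, ⟨τ, h2, he1, hr1⟩, rfl⟩
    refine ⟨ν ++ u :: τ, h1.append (.keep u h2), ?_, ?_⟩
    · intro d hd
      exact (List.mem_append.1 hd).elim (he2 d) (he1 d)
    · rw [List.reverse_append]
      have := hr1.append (hr2.frame τ)
      simpa using this

/-- **Regularity of nulled atomic closures:** for every `s`, the family
`F_s = {N(Φ_{s⇝ε})} ∪ {N(Φ_{s⇝t}) : t ∈ S}` of at most `|S|+1` guided relations is
closed under guided-relation derivatives of degree `|S|`: every member has, for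
every `u ∈ S`, a derivative indexed by `S` whose relation components lie in `F_s`. -/
theorem nulled_atomic_closures_regular
    (S A P : Type) (D : Set (Tr S A P)) (s : S) :
    ∀ Ψ ∈ GAtomFam D s, ∀ u : S,
      ∃ (ΛC : S → Set (List (Tr S A P) × List (Tr S A P))) (ΨC : S → GRel S A P),
        (∀ i : S, ΨC i ∈ GAtomFam D s) ∧ IsGDeriv D Ψ u ΛC ΨC := by
  rintro Ψ hΨ u
  have key : ∃ σ, Ψ = GNClo D (GPhiRel D s σ) := by
    rcases hΨ with rfl | ⟨t, rfl⟩
    · exact ⟨[], rfl⟩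
    · exact ⟨[t], rfl⟩
  obtain ⟨σ, rfl⟩ := key
  exact ⟨_, _, fun t => .inr ⟨t, rfl⟩, isGDeriv_GNClo_GPhiRel D s σ u⟩
end
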